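/- Let n ≥ 3, let ε : {1, …, n} → {±1} be a function taking the value −1 at least once and the value +1 at least once, and let f ∈ Aut(F_n) be the automorphism with f(x_i) = x_i^{ε(i)} for all i. Then IA_n ⊆ N(f), and N(f) = ρ⁻¹(Γ_n(2)) if ∏_i ε(i) = 1, while N(f) = ρ⁻¹(GΓ_n(2)) if ∏_i ε(i) = −1 (equivalently, there is a short exact sequence 1 → IA_n → N(f) → Γ_n(2) → 1, respectively 1 → IA_n → N(f) → GΓ_n(2) → 1). -/

import Mathlib

open Matrix

namespace NormalClosurePaper

/-- The automorphism group of the free group on `n` generators. -/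
abbrev FrAut (n : ℕ) := MulAut (FreeGroup (Fin n))

/-- Exponent sum of the generator `x_i` in a word of the free group. -/
def expSum {n : ℕ} (i : Fin n) : FreeGroup (Fin n) →* Multiplicative ℤ :=
  FreeGroup.lift fun j => Multiplicative.ofAdd (if j = i then (1 : ℤ) else 0)

/-- The abelianized matrix of an automorphism of the free group:
the `(i, j)` entry is the exponent sum of `x_i` in `f x_j`. -/
def mat {n : ℕ} (f : FrAut n) : Matrix (Fin n) (Fin n) ℤ :=
  Matrix.of fun i j => (expSum i (f (FreeGroup.of j))).toAdd

lemma expSum_apply {n : ℕ} (f : FrAut n) (i : Fin n) (w : FreeGroup (Fin n)) :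
    (expSum i (f w)).toAdd = ∑ k, mat f i k * (expSum k w).toAdd := by
  induction w using FreeGroup.induction_on with
  | C1 => simp
  | of j =>
      have h : (expSum i (f (FreeGroup.of j))).toAdd = mat f i j := rfl
      rw [h]
      simp [expSum, mul_ite, Finset.sum_ite_eq]
  | inv_of j ih =>
      simp only [_root_.map_inv, toAdd_inv, mul_neg, Finset.sum_neg_distrib, ih]
  | mul x y ihx ihy =>
      simp only [_root_.map_mul, toAdd_mul, mul_add, Finset.sum_add_distrib, ihx, ihy]

lemma mat_one {n : ℕ} : mat (1 : FrAut n) = 1 := by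
  ext i j
  simp [mat, expSum, Matrix.one_apply, eq_comm]

lemma mat_mul {n : ℕ} (f g : FrAut n) : mat (f * g) = mat f * mat g := by
  ext i j
  rw [Matrix.mul_apply]
  show (expSum i ((f * g) (FreeGroup.of j))).toAdd = _
  rw [show (f * g) (FreeGroup.of j) = f (g (FreeGroup.of j)) from rfl, expSum_apply]
  rfl

/-- The matrix of the induced map on the abelianization, as a monoid homomorphism. -/
def matHom (n : ℕ) : FrAut n →* Matrix (Fin n) (Fin n) ℤ where
  toFun := mat
  map_one' := mat_one
  map_mul' := mat_mul

/-- The homomorphism `Aut(F_n) → GL_n(ℤ)` induced by abelianization. -/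
def ρ (n : ℕ) : FrAut n →* GL (Fin n) ℤ := (matHom n).toHomUnits

/-- The composition of `ρ` with the determinant. -/
def detρ (n : ℕ) : FrAut n →* ℤˣ := (Matrix.GeneralLinearGroup.det).comp (ρ n)

/-- The special automorphism group `SAut(F_n)`: automorphisms whose induced matrix
has determinant `1`. -/
def SAut (n : ℕ) : Subgroup (FrAut n) := (detρ n).ker

/-- The Torelli subgroup `IA_n`, the kernel of `ρ`. -/
def IA (n : ℕ) : Subgroup (FrAut n) := (ρ n).ker

/-- The group of inner automorphisms of the free group. -/
def Inn (n : ℕ) : Subgroup (FrAut n) := (MulAut.conj (G := FreeGroup (Fin n))).range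

instance Inn_normal (n : ℕ) : (Inn n).Normal := by
  constructor
  rintro - ⟨a, rfl⟩ g
  refine ⟨g a, ?_⟩
  ext y
  simp [MulAut.conj_apply, MulAut.mul_apply, _root_.map_mul, _root_.map_inv]

/-- The outer automorphism group `Out(F_n)`. -/
abbrev OutF (n : ℕ) := FrAut n ⧸ Inn n

/-- The projection `Aut(F_n) → Out(F_n)`. -/
def toOut (n : ℕ) : FrAut n →* OutF n := QuotientGroup.mk' (Inn n)

lemma mat_conj {n : ℕ} (g : FreeGroup (Fin n)) : mat (MulAut.conj g) = 1 := by
  rw [← mat_one (n := n)]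
  ext i j
  simp only [mat, Matrix.of_apply, MulAut.conj_apply, MulAut.one_apply, _root_.map_mul,
    _root_.map_inv, toAdd_mul, toAdd_inv]
  omega

lemma ρ_conj {n : ℕ} (g : FreeGroup (Fin n)) : ρ n (MulAut.conj g) = 1 :=
  Units.ext (mat_conj g)

/-- The homomorphism `Out(F_n) → GL_n(ℤ)` induced by abelianization. -/
def ρOut (n : ℕ) : OutF n →* GL (Fin n) ℤ :=
  QuotientGroup.lift (Inn n) (ρ n) (by rintro - ⟨g, rfl⟩; exact ρ_conj g)

/-- The composition of `ρOut` with the determinant. -/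
def detρOut (n : ℕ) : OutF n →* ℤˣ := (Matrix.GeneralLinearGroup.det).comp (ρOut n)

/-- The special outer automorphism group `SOut(F_n)`. -/
def SOut (n : ℕ) : Subgroup (OutF n) := (detρOut n).ker

/-- Entrywise reduction `GL_n(ℤ) → GL_n(ℤ/ℓℤ)`. -/
def redGL (n ℓ : ℕ) : GL (Fin n) ℤ →* GL (Fin n) (ZMod ℓ) :=
  Units.map (RingHom.mapMatrix (Int.castRingHom (ZMod ℓ))).toMonoidHom

/-- The subgroup `GΓ_n(ℓ)` of `GL_n(ℤ)` of matrices congruent to the identity mod `ℓ`. -/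
def GGamma (n ℓ : ℕ) : Subgroup (GL (Fin n) ℤ) := (redGL n ℓ).ker

/-- The level `ℓ` congruence subgroup `Γ_n(ℓ)` (viewed inside `GL_n(ℤ)`): matrices with
determinant `1` that are congruent to the identity mod `ℓ`. -/
def GammaGL (n ℓ : ℕ) : Subgroup (GL (Fin n) ℤ) :=
  GGamma n ℓ ⊓ (Matrix.GeneralLinearGroup.det).ker

/-- Reduction `SL_n(ℤ) → SL_n(ℤ/ℓℤ)`. -/
def redSL (n ℓ : ℕ) : Matrix.SpecialLinearGroup (Fin n) ℤ →*
    Matrix.SpecialLinearGroup (Fin n) (ZMod ℓ) :=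
  Matrix.SpecialLinearGroup.map (Int.castRingHom (ZMod ℓ))

/-- Projection `SL_n(ℤ/ℓℤ) → PSL_n(ℤ/ℓℤ)`. -/
def projPSL (n ℓ : ℕ) : Matrix.SpecialLinearGroup (Fin n) (ZMod ℓ) →*
    Matrix.ProjectiveSpecialLinearGroup (Fin n) (ZMod ℓ) :=
  QuotientGroup.mk' _

/-- The length of the longest common prefix of two lists. -/
def lcp {β : Type*} [DecidableEq β] : List β → List β → ℕ
  | a :: l, b :: m => if a = b then lcp l m + 1 else 0
  | _, _ => 0

section Lcp

variable {β : Type*} [DecidableEq β]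

lemma le_lcp_iff {k : ℕ} {l m : List β} :
    k ≤ lcp l m ↔ k ≤ l.length ∧ k ≤ m.length ∧ l.take k = m.take k := by
  induction l generalizing m k with
  | nil => cases k <;> simp [lcp]
  | cons a l ih =>
    cases m with
    | nil => cases k <;> simp [lcp]
    | cons b m =>
      cases k with
      | zero => simp
      | succ k =>
        by_cases hab : a = b
        · simp [lcp, hab, ih]
        · simp [lcp, hab]

lemma lcp_comm (l m : List β) : lcp l m = lcp m l :=
  eq_of_forall_le_iff fun k => by rw [le_lcp_iff, le_lcp_iff]; tauto

lemma min_lcp_le (x y z : List β) : min (lcp x y) (lcp y z) ≤ lcp x z := by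
  obtain ⟨h₁, -, h₃⟩ := le_lcp_iff.1 (min_le_left (lcp x y) (lcp y z))
  obtain ⟨-, h₅, h₆⟩ := le_lcp_iff.1 (min_le_right (lcp x y) (lcp y z))
  exact le_lcp_iff.2 ⟨h₁, h₅, h₃.trans h₆⟩

lemma lcp_eq_of_lt {x y z : List β} (h : lcp x y < lcp y z) : lcp x z = lcp x y := by
  have h₁ := min_lcp_le x y z
  have h₂ := min_lcp_le x z y
  rw [lcp_comm z y] at h₂
  omega

end Lcp

section Words

variable {α : Type*} [DecidableEq α]

/-- The Gromov product of two elements of a free group, based at the identity. -/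
def gromov (x y : FreeGroup α) : ℕ := lcp x.toWord y.toWord

lemma gromov_comm (x y : FreeGroup α) : gromov x y = gromov y x := lcp_comm _ _

lemma isReduced_invRev_append {a b : α × Bool} {l m : List (α × Bool)}
    (hl : FreeGroup.IsReduced (a :: l)) (hm : FreeGroup.IsReduced (b :: m)) (hab : a ≠ b) :
    FreeGroup.IsReduced (FreeGroup.invRev (a :: l) ++ b :: m) := by
  have h₁ : FreeGroup.IsReduced (FreeGroup.invRev (a :: l)) := by
    rw [FreeGroup.isReduced_iff_reduce_eq, FreeGroup.reduce_invRev, hl.reduce_eq]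
  refine List.isChain_append.2 ⟨h₁, hm, ?_⟩
  intro x hx y hy
  simp [FreeGroup.invRev] at hx hy
  subst hx hy
  intro h
  obtain ⟨a₁, a₂⟩ := a
  obtain ⟨b₁, b₂⟩ := b
  cases a₂ <;> cases b₂ <;> simp_all

lemma norm_inv_mul_add_lcp {l m : List (α × Bool)} (hl : FreeGroup.IsReduced l)
    (hm : FreeGroup.IsReduced m) :
    ((FreeGroup.mk l)⁻¹ * FreeGroup.mk m).norm + 2 * lcp l m = l.length + m.length := by
  have norm_mk {k : List (α × Bool)} (hk : FreeGroup.IsReduced k) :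
      (FreeGroup.mk k).norm = k.length := by
    rw [FreeGroup.norm, FreeGroup.toWord_mk, hk.reduce_eq]
  induction l generalizing m with
  | nil =>
    rw [← FreeGroup.one_eq_mk, inv_one, one_mul, norm_mk hm]
    simp [lcp]
  | cons a l ih =>
    cases m with
    | nil =>
      rw [← FreeGroup.one_eq_mk, mul_one, FreeGroup.norm_inv_eq, norm_mk hl]
      simp [lcp]
    | cons b m =>
      by_cases hab : a = b
      · subst hab
        have h := ih (List.IsChain.tail hl) (List.IsChain.tail hm)
        have e (k : List (α × Bool)) :
            FreeGroup.mk (a :: k) = FreeGroup.mk [a] * FreeGroup.mk k := by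
          rw [FreeGroup.mul_mk, List.singleton_append]
        rw [e l, e m, _root_.mul_inv_rev, mul_assoc, inv_mul_cancel_left]
        simp only [lcp, if_true, List.length_cons, List.tail_cons] at h ⊢
        omega
      · rw [FreeGroup.inv_mk, FreeGroup.mul_mk, norm_mk (isReduced_invRev_append hl hm hab)]
        simp [lcp, hab]

lemma norm_inv_mul_add_gromov (x y : FreeGroup α) :
    (x⁻¹ * y).norm + 2 * gromov x y = x.norm + y.norm := by
  have h := norm_inv_mul_add_lcp (FreeGroup.isReduced_toWord (x := x))
    (FreeGroup.isReduced_toWord (x := y))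
  rwa [FreeGroup.mk_toWord, FreeGroup.mk_toWord] at h

lemma norm_mul_add_gromov (x y : FreeGroup α) :
    (x * y).norm + 2 * gromov x⁻¹ y = x.norm + y.norm := by
  simpa using norm_inv_mul_add_gromov x⁻¹ y

lemma invRev_take_invRev {α : Type*} (l : List (α × Bool)) (k : ℕ) :
    FreeGroup.invRev ((FreeGroup.invRev l).take k) = l.drop (l.length - k) := by
  simp [FreeGroup.invRev, List.take_reverse, List.map_drop, Function.comp_def]

/-- An element of length `2 * k` is the product of its first half and the inverse of the first
half of its inverse. -/
lemma eq_mk_take_mul_inv {v : FreeGroup α} {k : ℕ} (hk : v.norm = 2 * k) :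
    v = FreeGroup.mk (v.toWord.take k) * (FreeGroup.mk (v⁻¹.toWord.take k))⁻¹ := by
  have hk' : v.toWord.length = 2 * k := hk
  rw [FreeGroup.inv_mk, FreeGroup.toWord_inv, invRev_take_invRev, FreeGroup.mul_mk, hk',
    show 2 * k - k = k by omega, List.take_append_drop, FreeGroup.mk_toWord]

lemma two_mul_gromov_inv_self_lt {v : FreeGroup α} (hv : v ≠ 1) :
    2 * gromov v⁻¹ v < v.norm := by
  by_contra! h
  obtain ⟨k, hk | hk⟩ := Nat.even_or_odd' v.norm
  · obtain ⟨-, -, h₃⟩ := le_lcp_iff.1 (show k ≤ gromov v⁻¹ v by omega)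
    apply hv
    rw [eq_mk_take_mul_inv hk, h₃, mul_inv_cancel]
  · obtain ⟨-, h₂, h₃⟩ := le_lcp_iff.1 (show k + 1 ≤ gromov v⁻¹ v by omega)
    have hk' : v.toWord.length = 2 * k + 1 := hk
    have h₄ := congrArg (fun l => l[k]?) h₃
    simp only [List.getElem?_take_of_lt k.lt_succ_self, FreeGroup.toWord_inv,
      FreeGroup.invRev] at h₄
    rw [List.getElem?_reverse (by simp; omega), List.length_map, hk',
      show 2 * k + 1 - 1 - k = k by omega, List.getElem?_map,
      List.getElem?_eq_getElem (by omega)] at h₄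
    simpa using congrArg Prod.snd (Option.some_injective _ h₄)

lemma toWord_of_length_eq_norm {l : List (α × Bool)} (h : (FreeGroup.mk l).norm = l.length) :
    (FreeGroup.mk l).toWord = l :=
  (FreeGroup.reduce.red.sublist).eq_of_length h

end Words

section NielsenReduced

variable {α β : Type*} [DecidableEq α]

/-- The amount of cancellation between `Y a` and the `Y`-image of the first letter of a word. -/
def headCancel (Y : β × Bool → FreeGroup α) (a : β × Bool) : List (β × Bool) → ℕ
  | [] => 0
  | b :: _ => gromov (Y a)⁻¹ (Y b)

lemma gromov_prod_of_nielsenReduced {Y : β × Bool → FreeGroup α}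
    (h₂ : ∀ a b c : β × Bool, (a.1 = b.1 → a.2 = b.2) → (b.1 = c.1 → b.2 = c.2) →
      gromov (Y a)⁻¹ (Y b) + gromov (Y b)⁻¹ (Y c) < (Y b).norm)
    (h₁ : ∀ a b : β × Bool, (a.1 = b.1 → a.2 = b.2) → gromov (Y a)⁻¹ (Y b) < (Y b).norm)
    (a : β × Bool) (L : List (β × Bool)) (hL : FreeGroup.IsReduced (a :: L)) :
    gromov ((a :: L).map Y).prod (Y a) + headCancel Y a L = (Y a).norm ∧
      L.length + (Y a).norm ≤ ((a :: L).map Y).prod.norm + headCancel Y a L := by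
  induction L generalizing a with
  | nil =>
    have h := norm_inv_mul_add_gromov (Y a) (Y a)
    simp only [inv_mul_cancel, FreeGroup.norm_one] at h
    simp [headCancel]
    omega
  | cons b L ih =>
    obtain ⟨hab, hbL⟩ := FreeGroup.isReduced_cons_cons.1 hL
    obtain ⟨ih₁, ih₂⟩ := ih b hbL
    have hlt : gromov (Y a)⁻¹ (Y b) + headCancel Y b L < (Y b).norm := by
      cases L with
      | nil => simpa [headCancel] using h₁ a b hab
      | cons c L => exact h₂ a b c hab (FreeGroup.isReduced_cons_cons.1 hbL).1
    rw [List.map_cons, List.prod_cons]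
    generalize ((b :: L).map Y).prod = q at *
    have h₃ : gromov (Y a)⁻¹ q = gromov (Y a)⁻¹ (Y b) :=
      lcp_eq_of_lt (show gromov (Y a)⁻¹ (Y b) < gromov (Y b) q by
        rw [gromov_comm (Y b) q]; omega)
    have h₄ := norm_mul_add_gromov (Y a) q
    have h₅ := norm_inv_mul_add_gromov (Y a * q) (Y a)
    have h₆ : ((Y a * q)⁻¹ * Y a).norm = q.norm := by
      rw [show (Y a * q)⁻¹ * Y a = q⁻¹ by group, FreeGroup.norm_inv_eq]
    simp only [headCancel, List.length_cons]
    omega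

lemma length_le_norm_of_nielsenReduced {Y : β × Bool → FreeGroup α}
    (h₂ : ∀ a b c : β × Bool, (a.1 = b.1 → a.2 = b.2) → (b.1 = c.1 → b.2 = c.2) →
      gromov (Y a)⁻¹ (Y b) + gromov (Y b)⁻¹ (Y c) < (Y b).norm)
    {L : List (β × Bool)} (hL : FreeGroup.IsReduced L) :
    L.length ≤ (L.map Y).prod.norm := by
  cases L with
  | nil => simp
  | cons a L =>
    obtain ⟨-, h⟩ := gromov_prod_of_nielsenReduced h₂
      (fun a b hab => (Nat.le_add_right _ _).trans_lt (h₂ a b b hab fun _ => rfl)) a L hL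
    have : headCancel Y a L < (Y a).norm := by
      cases L with
      | nil => exact (Nat.zero_le _).trans_lt (h₂ a a a (fun _ => rfl) fun _ => rfl)
      | cons b L =>
        exact (Nat.le_add_left _ _).trans_lt
          (h₂ a a b (fun _ => rfl) (FreeGroup.isReduced_cons_cons.1 hL).1)
    simp only [List.length_cons]
    omega

end NielsenReduced

section HalfCode

variable {α : Type*} [Fintype α]

/-- The number whose digits, most significant first, encode the letters of a word. -/
noncomputable def wordCode (l : List (α × Bool)) : ℕ :=
  Nat.ofDigits (Fintype.card (α × Bool) + 2)
    (l.map fun a => (Fintype.equivFin (α × Bool) a : ℕ)).reverse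

lemma wordCode_append (p c : List (α × Bool)) :
    wordCode (p ++ c) =
      wordCode c + (Fintype.card (α × Bool) + 2) ^ c.length * wordCode p := by
  simp only [wordCode, List.map_append, List.reverse_append, Nat.ofDigits_append,
    List.length_reverse, List.length_map]

lemma wordCode_injective_of_length_eq {p q : List (α × Bool)} (h : p.length = q.length)
    (hc : wordCode p = wordCode q) : p = q := by
  have hlt (l : List (α × Bool)) :
      ∀ d ∈ (l.map fun a => (Fintype.equivFin (α × Bool) a : ℕ)).reverse,
        d < Fintype.card (α × Bool) + 2 := by
    intro d hd
    simp only [List.mem_reverse, List.mem_map] at hd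
    obtain ⟨a, -, rfl⟩ := hd
    have := (Fintype.equivFin (α × Bool) a).isLt
    omega
  have h₁ := Nat.ofDigits_inj_of_len_eq (by omega) (by simpa using h) (hlt p) (hlt q) hc
  refine List.map_injective_iff.2 ?_ (List.reverse_injective h₁)
  exact Fin.val_injective.comp (Fintype.equivFin (α × Bool)).injective

variable [DecidableEq α]

/-- The code of the first half of a word. -/
noncomputable def halfCode (w : FreeGroup α) : ℕ :=
  wordCode (w.toWord.take ((w.norm + 1) / 2))

/-- If `v` has length `2 * k` and cancels exactly half of itself against `w`, then left
multiplication by `v` replaces the first `k` letters of `w` by the first `k` letters of `v`. -/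
lemma halfCode_mul_lt {v w : FreeGroup α} {k : ℕ} (hv : v.norm = 2 * k)
    (hvw : gromov v⁻¹ w = k) (hw : 2 * k ≤ w.norm)
    (hcode : wordCode (v.toWord.take k) < wordCode (v⁻¹.toWord.take k)) :
    (v * w).norm = w.norm ∧
      halfCode (v * w) + halfCode (v * w)⁻¹ < halfCode w + halfCode w⁻¹ := by
  have hnorm : (v * w).norm = w.norm := by
    have := norm_mul_add_gromov v w
    omega
  refine ⟨hnorm, ?_⟩
  have hpre : v⁻¹.toWord.take k = w.toWord.take k := (le_lcp_iff.1 hvw.ge).2.2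
  have hv' := eq_mk_take_mul_inv hv
  have hpl : (v.toWord.take k).length = k := by
    have : v.toWord.length = 2 * k := hv
    simp; omega
  have hql : (w.toWord.take k).length = k := by
    have : v.toWord.length = 2 * k := hv
    rw [← hpre]; simp; omega
  rw [hpre] at hcode hv'
  generalize v.toWord.take k = p at *
  have hwc := List.take_append_drop k w.toWord
  generalize w.toWord.take k = q at *
  have hcl : (w.toWord.drop k).length + k = w.norm := by
    rw [List.length_drop, FreeGroup.norm] at *; omega
  generalize w.toWord.drop k = c at *
  have hvw' : v * w = FreeGroup.mk (p ++ c) := by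
    rw [hv', ← FreeGroup.mk_toWord (x := w), ← hwc, ← FreeGroup.mul_mk, ← FreeGroup.mul_mk]
    group
  have htw : (v * w).toWord = p ++ c := by
    rw [hvw']
    apply toWord_of_length_eq_norm
    rw [← hvw', hnorm, List.length_append]; omega
  have hh : ∃ r, (w.norm + 1) / 2 = k + r := ⟨(w.norm + 1) / 2 - k, by omega⟩
  obtain ⟨r, hr⟩ := hh
  have hinv (s : List (α × Bool)) :
      (FreeGroup.invRev (s ++ c)).take (k + r) = (FreeGroup.invRev c).take (k + r) := by
    rw [FreeGroup.invRev_append, List.take_append_of_le_length]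
    rw [FreeGroup.invRev_length]; omega
  have hfirst (s : List (α × Bool)) (hs : s.length = k) :
      (s ++ c).take (k + r) = s ++ c.take r := by
    rw [← hs, List.take_length_add_append]
  simp only [halfCode, FreeGroup.norm_inv_eq, hnorm, hr, FreeGroup.toWord_inv, htw, ← hwc, hinv,
    hfirst p hpl, hfirst q hql, wordCode_append]
  gcongr

end HalfCode

section Automorphisms

variable {n : ℕ}

/-- The endomorphism `x_j ↦ x_i ^ a * x_j * x_i ^ b` fixing the other generators. -/
def trHom (i j : Fin n) (a b : ℤ) : FreeGroup (Fin n) →* FreeGroup (Fin n) :=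
  FreeGroup.lift fun k =>
    if k = j then FreeGroup.of i ^ a * FreeGroup.of j * FreeGroup.of i ^ b else FreeGroup.of k

lemma trHom_of_same (i j : Fin n) (a b : ℤ) :
    trHom i j a b (FreeGroup.of j) =
      FreeGroup.of i ^ a * FreeGroup.of j * FreeGroup.of i ^ b := by
  simp [trHom]

lemma trHom_of_ne (i : Fin n) {j k : Fin n} (h : k ≠ j) (a b : ℤ) :
    trHom i j a b (FreeGroup.of k) = FreeGroup.of k := by
  simp [trHom, h]

lemma trHom_comp {i j : Fin n} (h : i ≠ j) (a b c d : ℤ) :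
    (trHom i j a b).comp (trHom i j c d) = trHom i j (c + a) (b + d) := by
  refine FreeGroup.ext_hom _ _ fun k => ?_
  rw [MonoidHom.comp_apply]
  by_cases hk : k = j
  · subst hk
    simp only [trHom_of_same, _root_.map_mul, map_zpow, trHom_of_ne i h, _root_.zpow_add]
    group
  · simp only [trHom_of_ne i hk]

lemma trHom_zero (i j : Fin n) : trHom i j 0 0 = MonoidHom.id _ := by
  refine FreeGroup.ext_hom _ _ fun k => ?_
  by_cases hk : k = j
  · subst hk; simp [trHom_of_same]
  · simp [trHom_of_ne i hk]

/-- The automorphism `x_j ↦ x_i ^ a * x_j * x_i ^ b` fixing the other generators. -/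
def tr {i j : Fin n} (h : i ≠ j) (a b : ℤ) : FrAut n :=
  MonoidHom.toMulEquiv (trHom i j a b) (trHom i j (-a) (-b))
    (by rw [trHom_comp h, add_neg_cancel, neg_add_cancel, trHom_zero])
    (by rw [trHom_comp h, neg_add_cancel, add_neg_cancel, trHom_zero])

@[simp]
lemma tr_of_same {i j : Fin n} (h : i ≠ j) (a b : ℤ) :
    tr h a b (FreeGroup.of j) = FreeGroup.of i ^ a * FreeGroup.of j * FreeGroup.of i ^ b :=
  trHom_of_same i j a b

lemma tr_of_ne {i j k : Fin n} (h : i ≠ j) (hk : k ≠ j) (a b : ℤ) :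
    tr h a b (FreeGroup.of k) = FreeGroup.of k :=
  trHom_of_ne i hk a b

lemma frAut_ext {φ ψ : FrAut n} (h : ∀ k, φ (FreeGroup.of k) = ψ (FreeGroup.of k)) : φ = ψ :=
  MulEquiv.toMonoidHom_injective (FreeGroup.ext_hom _ _ h)

lemma tr_mul_tr {i j : Fin n} (h : i ≠ j) (a b c d : ℤ) :
    tr h a b * tr h c d = tr h (c + a) (b + d) :=
  MulEquiv.toMonoidHom_injective (trHom_comp h a b c d)

lemma tr_zero {i j : Fin n} (h : i ≠ j) : tr h 0 0 = 1 :=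
  MulEquiv.toMonoidHom_injective (trHom_zero i j)

lemma tr_inv {i j : Fin n} (h : i ≠ j) (a b : ℤ) : (tr h a b)⁻¹ = tr h (-a) (-b) := by
  rw [inv_eq_iff_mul_eq_one, tr_mul_tr, neg_add_cancel, add_neg_cancel, tr_zero]

/-- The endomorphism `x_k ↦ x_k ^ δ k`. -/
def sgnHom (δ : Fin n → ℤˣ) : FreeGroup (Fin n) →* FreeGroup (Fin n) :=
  FreeGroup.lift fun k => FreeGroup.of k ^ (δ k : ℤ)

lemma sgnHom_comp (δ η : Fin n → ℤˣ) : (sgnHom δ).comp (sgnHom η) = sgnHom (δ * η) := by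
  refine FreeGroup.ext_hom _ _ fun k => ?_
  simp [sgnHom, _root_.zpow_mul]

lemma sgnHom_one : sgnHom (1 : Fin n → ℤˣ) = MonoidHom.id _ :=
  FreeGroup.ext_hom _ _ fun k => by simp [sgnHom]

/-- The automorphisms `x_k ↦ x_k ^ δ k`. -/
def sgn : (Fin n → ℤˣ) →* FrAut n where
  toFun δ := MonoidHom.toMulEquiv (sgnHom δ) (sgnHom δ)
    (by rw [sgnHom_comp, show δ * δ = 1 from funext fun k => Int.units_mul_self (δ k), sgnHom_one])
    (by rw [sgnHom_comp, show δ * δ = 1 from funext fun k => Int.units_mul_self (δ k), sgnHom_one])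
  map_one' := MulEquiv.toMonoidHom_injective sgnHom_one
  map_mul' δ η := MulEquiv.toMonoidHom_injective (sgnHom_comp δ η).symm

@[simp]
lemma sgn_of (δ : Fin n → ℤˣ) (k : Fin n) :
    sgn δ (FreeGroup.of k) = FreeGroup.of k ^ (δ k : ℤ) := by
  change sgnHom δ (FreeGroup.of k) = _
  simp [sgnHom]

/-- The automorphisms `x_k ↦ x_{σ k}`. -/
def perm : Equiv.Perm (Fin n) →* FrAut n where
  toFun σ := FreeGroup.freeGroupCongr σ
  map_one' := FreeGroup.freeGroupCongr_refl
  map_mul' σ τ := (FreeGroup.freeGroupCongr_trans τ σ).symm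

@[simp]
lemma perm_of (σ : Equiv.Perm (Fin n)) (k : Fin n) :
    perm σ (FreeGroup.of k) = FreeGroup.of (σ k) := by
  simp [perm]

end Automorphisms

section Nielsen

variable {n : ℕ}

lemma apply_eq_prod_letters (φ : FrAut n) (L : List (Fin n × Bool)) :
    φ (FreeGroup.mk L) = (L.map fun l => φ (FreeGroup.mk [l])).prod := by
  induction L with
  | nil => rw [← FreeGroup.one_eq_mk]; simp
  | cons a L ih =>
    rw [List.map_cons, List.prod_cons, ← ih, ← _root_.map_mul, FreeGroup.mul_mk,
      List.singleton_append]

lemma mk_letter_not (l : Fin n × Bool) :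
    FreeGroup.mk [(l.1, !l.2)] = (FreeGroup.mk [l])⁻¹ := by
  rw [FreeGroup.inv_mk]; rfl

lemma mk_letter_eq (l : Fin n × Bool) :
    FreeGroup.mk [l] = FreeGroup.of l.1 ^ (if l.2 then (1 : ℤ) else -1) := by
  obtain ⟨i, _ | _⟩ := l
  · simp [FreeGroup.of, FreeGroup.inv_mk, FreeGroup.invRev]
  · simp [FreeGroup.of]

lemma exists_transvection {P : Subgroup (FrAut n)}
    (hl : ∀ (i j : Fin n) (h : i ≠ j), tr h 1 0 ∈ P)
    (hr : ∀ (i j : Fin n) (h : i ≠ j), tr h 0 1 ∈ P)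
    {a b : Fin n × Bool} (hab : a.1 ≠ b.1) :
    ∃ ν ∈ P, ν (FreeGroup.mk [b]) = FreeGroup.mk [a] * FreeGroup.mk [b] ∧
      ∀ k ≠ b.1, ν (FreeGroup.of k) = FreeGroup.of k := by
  obtain ⟨i, s⟩ := a
  obtain ⟨j, t⟩ := b
  have h : i ≠ j := hab
  cases t with
  | true =>
    refine ⟨tr h (if s then 1 else -1) 0, ?_, ?_, fun k hk => tr_of_ne h hk _ _⟩
    · cases s
      · simpa [tr_inv] using inv_mem (hl i j h)
      · exact hl i j h
    · rw [mk_letter_eq, mk_letter_eq]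
      simp
  | false =>
    refine ⟨tr h 0 (if s then -1 else 1), ?_, ?_, fun k hk => tr_of_ne h hk _ _⟩
    · cases s
      · exact hr i j h
      · simpa [tr_inv] using inv_mem (hr i j h)
    · rw [mk_letter_eq, mk_letter_eq]
      cases s <;> simp

lemma sum_mul_transvection {F : FreeGroup (Fin n) → ℕ} (hF : ∀ x, F x⁻¹ = F x) (φ ν : FrAut n)
    {a b : Fin n × Bool} (h₁ : ν (FreeGroup.mk [b]) = FreeGroup.mk [a] * FreeGroup.mk [b])
    (h₂ : ∀ k ≠ b.1, ν (FreeGroup.of k) = FreeGroup.of k) :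
    ∑ k, F ((φ * ν) (FreeGroup.of k)) + F (φ (FreeGroup.mk [b])) =
      ∑ k, F (φ (FreeGroup.of k)) + F (φ (FreeGroup.mk [a]) * φ (FreeGroup.mk [b])) := by
  have hb (ψ : FrAut n) : F (ψ (FreeGroup.of b.1)) = F (ψ (FreeGroup.mk [b])) := by
    rw [mk_letter_eq b]
    split_ifs <;> simp [hF]
  rw [← Finset.add_sum_erase _ _ (Finset.mem_univ b.1),
    ← Finset.add_sum_erase _ (fun k => F (φ (FreeGroup.of k))) (Finset.mem_univ b.1), hb, hb,
    MulAut.mul_apply, h₁, _root_.map_mul,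
    Finset.sum_congr rfl (g := fun k => F (φ (FreeGroup.of k)))]
  · ring
  · intro k hk
    rw [MulAut.mul_apply, h₂ k (Finset.ne_of_mem_erase hk)]

/-- An automorphism mapping every generator to a generator or its inverse is a product of a
permutation and a sign change. -/
lemma exists_eq_perm_mul_sgn (φ : FrAut n)
    (h : ∀ k, ∃ l : Fin n × Bool, φ (FreeGroup.of k) = FreeGroup.mk [l]) :
    ∃ (σ : Equiv.Perm (Fin n)) (δ : Fin n → ℤˣ), φ = perm σ * sgn δ := by
  choose l hl using h
  have hinj : Function.Injective fun k => (l k).1 := by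
    intro k k' hkk
    have hk : FreeGroup.mk [l k] = FreeGroup.mk [l k'] ∨
        FreeGroup.mk [l k] = (FreeGroup.mk [l k'])⁻¹ := by
      have hkk' : (l k).1 = (l k').1 := hkk
      rw [mk_letter_eq (l k), mk_letter_eq (l k'), hkk']
      split_ifs <;> simp
    rw [← hl, ← hl, ← _root_.map_inv, φ.injective.eq_iff, φ.injective.eq_iff] at hk
    rcases hk with hk | hk
    · exact FreeGroup.of_injective hk
    · have := congrArg FreeGroup.toWord hk
      simp [FreeGroup.toWord_inv, FreeGroup.invRev] at this
  refine ⟨Equiv.ofBijective _ (Finite.injective_iff_bijective.1 hinj),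
    fun k => if (l k).2 then 1 else -1, frAut_ext fun k => ?_⟩
  rw [hl, mk_letter_eq]
  split_ifs with hs <;> simp [hs]

/-- Theorem of Nielsen: the automorphism group of a finitely generated free group is generated by
elementary transvections, permutations and sign changes of the generators. -/
theorem mem_of_nielsen_generators {P : Subgroup (FrAut n)}
    (hl : ∀ (i j : Fin n) (h : i ≠ j), tr h 1 0 ∈ P)
    (hr : ∀ (i j : Fin n) (h : i ≠ j), tr h 0 1 ∈ P)
    (hσ : ∀ σ, perm σ ∈ P) (hδ : ∀ δ, sgn δ ∈ P) (φ : FrAut n) : φ ∈ P := by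
  induction hm : toLex (∑ k, (φ (FreeGroup.of k)).norm,
      ∑ k, (halfCode (φ (FreeGroup.of k)) + halfCode (φ (FreeGroup.of k))⁻¹))
    using WellFoundedLT.induction generalizing φ with
  | ind m ih =>
  by_contra hφ
  set Y : Fin n × Bool → FreeGroup (Fin n) := fun l => φ (FreeGroup.mk [l]) with hY
  have hYnot (l : Fin n × Bool) : Y (l.1, !l.2) = (Y l)⁻¹ := by
    simp only [hY, mk_letter_not, _root_.map_inv]
  have hY1 (l : Fin n × Bool) : Y l ≠ 1 := by
    intro h
    rw [hY] at h
    simp only [map_eq_one_iff φ φ.injective] at h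
    simpa using congrArg FreeGroup.toWord h
  have reduce {a b : Fin n × Bool} (hab : a.1 ≠ b.1) :
      (Y b).norm ≤ (Y a * Y b).norm ∧ ((Y a * Y b).norm = (Y b).norm →
        ¬ (halfCode (Y a * Y b) + halfCode (Y a * Y b)⁻¹ <
          halfCode (Y b) + halfCode (Y b)⁻¹)) := by
    by_contra hlt
    obtain ⟨ν, hν, hνb, hνk⟩ := exists_transvection hl hr hab
    have h₁ := sum_mul_transvection (F := FreeGroup.norm) (fun _ => FreeGroup.norm_inv_eq)
      φ ν hνb hνk
    have h₂ := sum_mul_transvection (F := fun x => halfCode x + halfCode x⁻¹)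
      (fun x => by rw [inv_inv, add_comm]) φ ν hνb hνk
    refine hφ ((Subgroup.mul_mem_cancel_right P hν).1 (ih _ ?_ (φ * ν) rfl))
    rw [← hm, Prod.Lex.toLex_lt_toLex]
    simp only [hY] at hlt
    omega
  have hgr (a b : Fin n × Bool) (hab : a.1 = b.1 → a.2 = b.2) :
      2 * gromov (Y a)⁻¹ (Y b) ≤ (Y a).norm ∧ 2 * gromov (Y a)⁻¹ (Y b) ≤ (Y b).norm := by
    by_cases h : a.1 = b.1
    · obtain rfl : a = b := Prod.ext h (hab h)
      have := two_mul_gromov_inv_self_lt (hY1 a)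
      omega
    · have h₁ := (reduce h).1
      have h₂ := (reduce (a := (b.1, !b.2)) (b := (a.1, !a.2)) (Ne.symm h)).1
      rw [hYnot, hYnot, ← _root_.mul_inv_rev, FreeGroup.norm_inv_eq,
        FreeGroup.norm_inv_eq] at h₂
      have h₃ := norm_mul_add_gromov (Y a) (Y b)
      omega
  have half {b c : Fin n × Bool} {k : ℕ} (hbc : b.1 = c.1 → b.2 = c.2)
      (hb : (Y b).norm = 2 * k) (hk : gromov (Y b)⁻¹ (Y c) = k) :
      wordCode ((Y b)⁻¹.toWord.take k) ≤ wordCode ((Y b).toWord.take k) := by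
    by_contra! hlt
    have h₁ : b.1 ≠ c.1 := by
      intro h
      obtain rfl : b = c := Prod.ext h (hbc h)
      have := two_mul_gromov_inv_self_lt (hY1 b)
      omega
    have h₂ := hgr b c hbc
    obtain ⟨h₃, h₄⟩ := halfCode_mul_lt hb hk (by omega) hlt
    exact (reduce h₁).2 h₃ h₄
  have htriple (a b c : Fin n × Bool) (hab : a.1 = b.1 → a.2 = b.2)
      (hbc : b.1 = c.1 → b.2 = c.2) :
      gromov (Y a)⁻¹ (Y b) + gromov (Y b)⁻¹ (Y c) < (Y b).norm := by
    by_contra! hle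
    have h₁ := hgr a b hab
    have h₂ := hgr b c hbc
    have hb : (Y b).norm = 2 * gromov (Y b)⁻¹ (Y c) := by omega
    have h₃ := half hbc hb rfl
    have h₄ := half (b := (b.1, !b.2)) (c := (a.1, !a.2)) (k := gromov (Y b)⁻¹ (Y c))
      (fun h => by rw [hab h.symm])
      (by rw [hYnot, FreeGroup.norm_inv_eq, hb])
      (by rw [hYnot, hYnot, inv_inv, gromov_comm]; omega)
    rw [hYnot, inv_inv] at h₄
    have hlen : (Y b).toWord.length = 2 * gromov (Y b)⁻¹ (Y c) := hb
    have h₅ := wordCode_injective_of_length_eq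
      (by simp [FreeGroup.toWord_inv, FreeGroup.invRev_length]) (h₃.antisymm h₄)
    apply hY1 b
    rw [eq_mk_take_mul_inv hb, h₅, mul_inv_cancel]
  have hletter (k : Fin n) : ∃ l : Fin n × Bool, φ⁻¹ (FreeGroup.of k) = FreeGroup.mk [l] := by
    have h₁ := length_le_norm_of_nielsenReduced htriple
      (FreeGroup.isReduced_toWord (x := φ⁻¹ (FreeGroup.of k)))
    rw [hY, ← apply_eq_prod_letters, FreeGroup.mk_toWord, MulAut.apply_inv_self,
      FreeGroup.norm_of] at h₁
    have h₂ : (φ⁻¹ (FreeGroup.of k)).toWord ≠ [] := by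
      rw [Ne, FreeGroup.toWord_eq_nil_iff, map_eq_one_iff _ (φ⁻¹).injective]
      exact FreeGroup.of_ne_one k
    obtain ⟨l, hl⟩ := List.length_eq_one_iff.1
      (le_antisymm h₁ (List.length_pos_iff.2 h₂))
    exact ⟨l, by rw [← hl, FreeGroup.mk_toWord]⟩
  obtain ⟨σ, δ, h⟩ := exists_eq_perm_mul_sgn φ⁻¹ hletter
  exact hφ (inv_mem_iff.1 (h ▸ mul_mem (hσ σ) (hδ δ)))

end Nielsen

section Steinberg

variable {ι G : Type*} [Group G]

/-- Elements `E i j` satisfying the Steinberg relations over the field with two elements. -/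
structure IsSteinberg (E : ι → ι → G) : Prop where
  sq : ∀ {i j}, i ≠ j → E i j * E i j = 1
  comm : ∀ {i j k l}, i ≠ j → k ≠ l → j ≠ k → i ≠ l → E i j * E k l = E k l * E i j
  comm_adj : ∀ {i j k}, i ≠ j → j ≠ k → i ≠ k → E i j * E j k = E i k * (E j k * E i j)

namespace IsSteinberg

variable {E : ι → ι → G}

lemma inv_eq (hE : IsSteinberg E) {i j : ι} (h : i ≠ j) : (E i j)⁻¹ = E i j :=
  inv_eq_of_mul_eq_one_left (hE.sq h)

lemma sq_assoc (hE : IsSteinberg E) {i j : ι} (h : i ≠ j) (x : G) : E i j * (E i j * x) = x := by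
  rw [← mul_assoc, hE.sq h, one_mul]

lemma comm_assoc (hE : IsSteinberg E) {i j k l : ι} (h₁ : i ≠ j) (h₂ : k ≠ l) (h₃ : j ≠ k)
    (h₄ : i ≠ l) (x : G) :
    E i j * (E k l * x) = E k l * (E i j * x) := by
  rw [← mul_assoc, hE.comm h₁ h₂ h₃ h₄, mul_assoc]

lemma comm_adj_assoc (hE : IsSteinberg E) {i j k : ι} (h₁ : i ≠ j) (h₂ : j ≠ k) (h₃ : i ≠ k)
    (x : G) :
    E i j * (E j k * x) = E i k * (E j k * (E i j * x)) := by
  rw [← mul_assoc, hE.comm_adj h₁ h₂ h₃]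
  simp only [mul_assoc]

lemma comm_adj_symm_assoc (hE : IsSteinberg E) {i j k : ι} (h₁ : i ≠ j) (h₂ : j ≠ k) (h₃ : i ≠ k)
    (x : G) :
    E j k * (E i j * x) = E i k * (E i j * (E j k * x)) := by
  have h := hE.comm_adj_assoc h₁ h₂ h₃ x
  rw [h, hE.sq_assoc h₃]

lemma commutator_assoc (hE : IsSteinberg E) {i j k : ι} (hij : i ≠ j) (hik : i ≠ k) (hkj : k ≠ j)
    (x : G) :
    E i k * (E k j * (E i k * (E k j * x))) = E i j * x := by
  rw [hE.comm_adj_assoc hik hkj hij (E i k * (E k j * x)), hE.sq_assoc hik, hE.sq_assoc hkj]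

/-- The transposed family also satisfies the Steinberg relations. -/
lemma transpose (hE : IsSteinberg E) : IsSteinberg fun i j => E j i where
  sq h := hE.sq h.symm
  comm h₁ h₂ h₃ h₄ := hE.comm h₁.symm h₂.symm h₄ h₃
  comm_adj {i j k} h₁ h₂ h₃ := by
    have h := hE.comm_adj_symm_assoc h₂.symm h₁.symm h₃.symm 1
    simpa only [mul_one] using h

lemma braid (hE : IsSteinberg E) {i j k : ι} (hij : i ≠ j) (hik : i ≠ k) (hjk : j ≠ k) :
    E i j * (E j i * E i j) = E j i * (E i j * E j i) := by
  have h₁ (x : G) : E i j * (E j i * (E i j * (E i k * x))) =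
      E j k * (E i j * (E j i * (E i j * x))) := by
    rw [hE.comm_assoc hij hik hij.symm hik, hE.comm_adj_assoc hij.symm hik hjk,
      hE.comm_adj_assoc hij hjk hik, hE.comm_assoc hij hik hij.symm hik,
      hE.comm_assoc hjk hik hik.symm hjk, hE.sq_assoc hik]
  have h₂ (x : G) : E i j * (E j i * (E i j * (E k j * x))) =
      E k i * (E i j * (E j i * (E i j * x))) := by
    rw [hE.comm_assoc hij hjk.symm hjk hij, hE.comm_adj_symm_assoc hjk.symm hij.symm hik.symm,
      hE.comm_adj_symm_assoc hik.symm hij hjk.symm, hE.comm_assoc hij hjk.symm hjk hij,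
      hE.comm_assoc hik.symm hjk.symm hik hjk.symm, hE.sq_assoc hjk.symm]
  have h₃ := hE.commutator_assoc hij hik hjk.symm (E i j)
  have h₄ := hE.commutator_assoc hij.symm hjk hik.symm (E i j * (E j i * (E i j * E i j)))
  rw [← h₂, ← h₁, ← h₂, ← h₁, h₃] at h₄
  simpa only [hE.sq hij, hE.sq_assoc hij, mul_one] using h₄

end IsSteinberg

lemma closure_induction_of_involutions {s : Set G} (hs : ∀ x ∈ s, x * x = 1) {p : G → Prop}
    (one : p 1) (mul : ∀ x ∈ s, ∀ y ∈ Subgroup.closure s, p y → p (x * y)) {g : G}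
    (hg : g ∈ Subgroup.closure s) : p g := by
  induction hg using Subgroup.closure_induction_left with
  | one => exact one
  | mul_left x hx y hy ih => exact mul x hx y hy ih
  | inv_mul_cancel x hx y hy ih =>
    rw [inv_eq_of_mul_eq_one_left (hs x hx)]
    exact mul x hx y hy ih

/-- The subgroup generated by the `E i j` with `i ∈ A`, `j ∈ B`. -/
def blockSubgroup (E : ι → ι → G) (A B : Finset ι) : Subgroup G :=
  Subgroup.closure {g | ∃ i ∈ A, ∃ j ∈ B, i ≠ j ∧ g = E i j}

section Block

variable {E : ι → ι → G}

lemma mem_block {A B : Finset ι} {i j : ι} (hi : i ∈ A) (hj : j ∈ B) (hij : i ≠ j) :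
    E i j ∈ blockSubgroup E A B :=
  Subgroup.subset_closure ⟨i, hi, j, hj, hij, rfl⟩

lemma blockSubgroup_mono {A A' B B' : Finset ι} (hA : A ⊆ A') (hB : B ⊆ B') :
    blockSubgroup E A B ≤ blockSubgroup E A' B' :=
  Subgroup.closure_mono fun _ ⟨i, hi, j, hj, h⟩ => ⟨i, hA hi, j, hB hj, h⟩

lemma blockSubgroup_induction (hE : IsSteinberg E) {A B : Finset ι} {p : G → Prop} (one : p 1)
    (mul : ∀ i ∈ A, ∀ j ∈ B, i ≠ j → ∀ y ∈ blockSubgroup E A B, p y → p (E i j * y)) {g : G}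
    (hg : g ∈ blockSubgroup E A B) : p g := by
  refine closure_induction_of_involutions ?_ one ?_ hg
  · rintro _ ⟨i, -, j, -, hij, rfl⟩
    exact hE.sq hij
  · rintro _ ⟨i, hi, j, hj, hij, rfl⟩ y hy hp
    exact mul i hi j hj hij y hy hp

lemma column_comm (hE : IsSteinberg E) {W : Finset ι} {m k i : ι} (hki : k ≠ i) (hkm : k ≠ m)
    (hi : i ∉ W) {u : G} (hu : u ∈ blockSubgroup E W {m}) : E k i * u = u * E k i := by
  refine blockSubgroup_induction (p := fun u => E k i * u = u * E k i) hE (by simp) ?_ hu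
  intro p hp q hq hpq y _ hy
  rw [Finset.mem_singleton] at hq
  subst hq
  rw [hE.comm_assoc hki hpq (fun h => hi (h ▸ hp)) hkm, hy, mul_assoc]

lemma column_normalize (hE : IsSteinberg E) {W : Finset ι} {m i j : ι} (hij : i ≠ j)
    (him : i ≠ m) (hi : i ∈ W) {u : G} (hu : u ∈ blockSubgroup E W {m}) :
    ∃ u' ∈ blockSubgroup E W {m}, E i j * u = u' * E i j := by
  refine blockSubgroup_induction
    (p := fun u => ∃ u' ∈ blockSubgroup E W {m}, E i j * u = u' * E i j) hE
    ⟨1, one_mem _, by simp⟩ ?_ hu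
  rintro p hp q hq hpq y _ ⟨y', hy', hy⟩
  rw [Finset.mem_singleton] at hq
  subst hq
  have hpm := mem_block (E := E) hp (Finset.mem_singleton_self q) hpq
  by_cases hjp : j = p
  · subst hjp
    refine ⟨E i q * (E j q * y'),
      mul_mem (mem_block hi (Finset.mem_singleton_self q) him) (mul_mem hpm hy'), ?_⟩
    rw [hE.comm_adj_assoc hij hpq him, hy]
    simp only [mul_assoc]
  · exact ⟨E p q * y', mul_mem hpm hy', by
      rw [hE.comm_assoc hij hpq hjp him, hy, mul_assoc]⟩

variable [DecidableEq ι]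

lemma column_split (hE : IsSteinberg E) {W : Finset ι} {m i : ι} (him : i ≠ m) {u : G}
    (hu : u ∈ blockSubgroup E W {m}) : u ∈ blockSubgroup E (W.erase i) {m} ∨
      ∃ u' ∈ blockSubgroup E (W.erase i) {m}, u = E i m * u' := by
  refine blockSubgroup_induction (p := fun u => u ∈ blockSubgroup E (W.erase i) {m} ∨
      ∃ u' ∈ blockSubgroup E (W.erase i) {m}, u = E i m * u') hE (Or.inl (one_mem _)) ?_ hu
  intro p hp q hq hpq y _ hy
  rw [Finset.mem_singleton] at hq
  subst hq
  by_cases hpi : p = i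
  · subst hpi
    rcases hy with hy | ⟨y', hy', rfl⟩
    · exact Or.inr ⟨y, hy, rfl⟩
    · exact Or.inl (by rwa [hE.sq_assoc hpq])
  · have hpm := mem_block (E := E) (Finset.mem_erase.2 ⟨hpi, hp⟩) (Finset.mem_singleton_self q) hpq
    rcases hy with hy | ⟨y', hy', rfl⟩
    · exact Or.inl (mul_mem hpm hy)
    · exact Or.inr ⟨_, mul_mem hpm hy', hE.comm_assoc hpq him him.symm hpq y'⟩

end Block

section Cosets

variable [DecidableEq ι] {E : ι → ι → G} {S : Finset ι} {m : ι}

lemma mk_mul_congr {H : Subgroup G} {x y : G} (h : (x : G ⧸ H) = y) (g : G) :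
    ((g * x : G) : G ⧸ H) = (g * y : G) :=
  congrArg (g • ·) h

lemma mk_row_mul_column (hE : IsSteinberg E) (hm : m ∉ S) {i : ι} (hi : i ∈ S) {u : G}
    (hu : u ∈ blockSubgroup E (S.erase i) {m}) :
    ((E m i * u : G) : G ⧸ blockSubgroup E (insert m S) S) = u := by
  have him : i ≠ m := fun h => hm (h ▸ hi)
  refine blockSubgroup_induction (p := fun u =>
    ((E m i * u : G) : G ⧸ blockSubgroup E (insert m S) S) = u) hE ?_ ?_ hu
  · rw [mul_one, ← one_mul (E m i)]
    exact QuotientGroup.mk_mul_of_mem _ (mem_block (Finset.mem_insert_self _ _) hi him.symm)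
  · intro k hk q hq hkm y hy ih
    rw [Finset.mem_singleton] at hq
    subst hq
    have hki := Finset.ne_of_mem_erase hk
    rw [hE.comm_adj_symm_assoc hkm him.symm hki, hE.comm_assoc hki hkm hki.symm hkm,
      hE.comm_assoc hki him.symm him hki,
      column_comm hE hki hkm (Finset.notMem_erase i S) hy, ← mul_assoc (E q i)]
    refine mk_mul_congr ?_ _
    rw [QuotientGroup.mk_mul_of_mem _ (mem_block
      (Finset.mem_insert_of_mem (Finset.mem_of_mem_erase hk)) hi hki), ih]

/-- The cosets covered by the Bruhat-type decomposition of the subgroup generated by the `E i j`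
with `i, j ∈ insert m S`. -/
def IsCovered (E : ι → ι → G) (S : Finset ι) (m : ι) (x : G) : Prop :=
  (∃ u ∈ blockSubgroup E S {m}, (x : G ⧸ blockSubgroup E (insert m S) S) = u) ∨
    ∃ i ∈ S, ∃ u ∈ blockSubgroup E (S.erase i) {m},
      (x : G ⧸ blockSubgroup E (insert m S) S) = (E m i * (E i m * u) : G)

lemma IsCovered.congr {x y : G} (h : IsCovered E S m x)
    (hxy : (y : G ⧸ blockSubgroup E (insert m S) S) = x) : IsCovered E S m y := by
  rwa [IsCovered, hxy]

lemma isCovered_column {u : G} (hu : u ∈ blockSubgroup E S {m}) : IsCovered E S m u :=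
  Or.inl ⟨u, hu, rfl⟩

lemma isCovered_big {i : ι} (hi : i ∈ S) {u : G} (hu : u ∈ blockSubgroup E (S.erase i) {m}) :
    IsCovered E S m (E m i * (E i m * u)) :=
  Or.inr ⟨i, hi, u, hu, rfl⟩

lemma isCovered_mul_column (hE : IsSteinberg E) (hm : m ∉ S) {a b : ι} (ha : a ∈ insert m S)
    (hb : b ∈ insert m S) (hab : a ≠ b) {u : G} (hu : u ∈ blockSubgroup E S {m}) :
    IsCovered E S m (E a b * u) := by
  have hne {i : ι} (hi : i ∈ S) : i ≠ m := fun h => hm (h ▸ hi)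
  rcases Finset.mem_insert.1 hb with rfl | hbS
  · exact isCovered_column (mul_mem (mem_block
      (Finset.mem_of_mem_insert_of_ne ha hab) (Finset.mem_singleton_self _) hab) hu)
  rcases Finset.mem_insert.1 ha with rfl | haS
  · rcases column_split hE (hne hbS) hu with hu | ⟨u', hu', rfl⟩
    · exact (isCovered_column (blockSubgroup_mono (Finset.erase_subset _ _) subset_rfl hu)).congr
        (mk_row_mul_column hE hm hbS hu)
    · exact isCovered_big hbS hu'
  · obtain ⟨u', hu', h⟩ := column_normalize hE hab (hne haS) haS hu
    rw [h]
    exact (isCovered_column hu').congr (QuotientGroup.mk_mul_of_mem _ (mem_block ha hbS hab))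

lemma isCovered_row_mul_big (hE : IsSteinberg E) (hm : m ∉ S) {i k : ι} (hi : i ∈ S) (hk : k ∈ S)
    {u : G} (hu : u ∈ blockSubgroup E (S.erase i) {m}) :
    IsCovered E S m (E m k * (E m i * (E i m * u))) := by
  have hne {i : ι} (hi : i ∈ S) : i ≠ m := fun h => hm (h ▸ hi)
  have him := hne hi
  have hkm := hne hk
  by_cases hki : k = i
  · subst hki
    rw [hE.sq_assoc hkm.symm]
    exact isCovered_column (mul_mem (mem_block hk (Finset.mem_singleton_self _) hkm)
      (blockSubgroup_mono (Finset.erase_subset _ _) subset_rfl hu))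
  rcases column_split hE hkm hu with hu' | ⟨u', hu', rfl⟩
  · rw [hE.comm_assoc hkm.symm him.symm hkm him.symm]
    refine (isCovered_big hi hu).congr (mk_mul_congr (mk_row_mul_column hE hm hk ?_) _)
    exact mul_mem (mem_block (Finset.mem_erase.2 ⟨Ne.symm hki, hi⟩)
      (Finset.mem_singleton_self _) him)
      (blockSubgroup_mono (Finset.erase_subset_erase _ (Finset.erase_subset _ _)) subset_rfl hu')
  · have hcol : E k m * u' ∈ blockSubgroup E (S.erase i) {m} :=
      mul_mem (mem_block (Finset.mem_erase.2 ⟨hki, hk⟩) (Finset.mem_singleton_self _) hkm)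
        (blockSubgroup_mono (Finset.erase_subset _ _) subset_rfl hu')
    have hik : i ≠ k := Ne.symm hki
    have h₁ : E i m * (E k m * u') = E i k * (E k m * u' * E i k) := by
      have h := hE.comm_adj_assoc hik hkm him (E i k * u')
      rw [hE.sq_assoc hik, column_comm hE hik him (Finset.notMem_erase k _) hu'] at h
      rw [← h, mul_assoc]
    have h₂ : E m k * (E m i * (E i m * (E k m * u'))) =
        E i k * (E m i * (E k m * u') * E i k) := by
      rw [h₁, hE.comm_adj_assoc him.symm hik hkm.symm, hE.sq_assoc hkm.symm, mul_assoc (E m i)]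
    rw [h₂]
    refine (isCovered_mul_column hE hm (Finset.mem_insert_of_mem hi) (Finset.mem_insert_of_mem hk)
      hik (blockSubgroup_mono (Finset.erase_subset _ _) subset_rfl hcol)).congr
      (mk_mul_congr ?_ _)
    rw [QuotientGroup.mk_mul_of_mem _ (mem_block (Finset.mem_insert_of_mem hi) hk hik),
      mk_row_mul_column hE hm hi hcol]

lemma isCovered_column_mul_big (hE : IsSteinberg E) (hm : m ∉ S)
    (hthird : ∀ i j : ι, ∃ k, k ≠ i ∧ k ≠ j) {i k : ι} (hi : i ∈ S) (hk : k ∈ S)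
    {u : G} (hu : u ∈ blockSubgroup E (S.erase i) {m}) :
    IsCovered E S m (E k m * (E m i * (E i m * u))) := by
  have hne {i : ι} (hi : i ∈ S) : i ≠ m := fun h => hm (h ▸ hi)
  have him := hne hi
  have hkm := hne hk
  by_cases hki : k = i
  · subst hki
    obtain ⟨l, hlk, hlm⟩ := hthird k m
    have h : E k m * (E m k * (E k m * u)) = E m k * (E k m * (E m k * u)) := by
      simpa only [mul_assoc] using congrArg (· * u) (hE.braid hkm hlk.symm hlm.symm)
    rw [h]
    exact (isCovered_big hk hu).congr
      (mk_mul_congr (mk_mul_congr (mk_row_mul_column hE hm hk hu) _) _)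
  · rw [hE.comm_adj_assoc hkm him.symm hki, hE.comm_assoc hki him.symm him hki,
      hE.comm_assoc hki hkm (Ne.symm hki) hkm, hE.comm_adj_assoc hki him hkm,
      hE.sq_assoc hkm, column_comm hE hki hkm (Finset.notMem_erase i S) hu]
    refine (isCovered_big hi hu).congr (mk_mul_congr (mk_mul_congr ?_ _) _)
    exact QuotientGroup.mk_mul_of_mem _ (mem_block (Finset.mem_insert_of_mem hk) hi hki)

lemma isCovered_block_mul_big (hE : IsSteinberg E) (hm : m ∉ S) {i k l : ι} (hi : i ∈ S)
    (hk : k ∈ S) (hl : l ∈ S) (hkl : k ≠ l) {u : G}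
    (hu : u ∈ blockSubgroup E (S.erase i) {m}) :
    IsCovered E S m (E k l * (E m i * (E i m * u))) := by
  have hne {i : ι} (hi : i ∈ S) : i ≠ m := fun h => hm (h ▸ hi)
  have him := hne hi
  have hkm := hne hk
  have hlm := hne hl
  have hmem : E k l ∈ blockSubgroup E (insert m S) S :=
    mem_block (Finset.mem_insert_of_mem hk) hl hkl
  by_cases hki : k = i
  · subst hki
    rw [hE.comm_adj_symm_assoc hkm.symm hkl hlm.symm, hE.comm_assoc hkl hkm hkl.symm hkm]
    rcases column_split hE hlm hu with hu' | ⟨u', hu', rfl⟩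
    · rw [column_comm hE hkl hkm (Finset.notMem_erase l _) hu']
      exact (isCovered_row_mul_big hE hm hk hl hu).congr (mk_mul_congr (mk_mul_congr
        (mk_mul_congr (QuotientGroup.mk_mul_of_mem _ hmem) _) _) _)
    · have hcol : E l m * u' ∈ blockSubgroup E (S.erase k) {m} :=
        mul_mem (mem_block (Finset.mem_erase.2 ⟨hkl.symm, hl⟩) (Finset.mem_singleton_self _) hlm)
          (blockSubgroup_mono (Finset.erase_subset _ _) subset_rfl hu')
      rw [hE.comm_adj_assoc hkl hlm hkm, hE.sq_assoc hkm,
        column_comm hE hkl hkm (Finset.notMem_erase l _) hu', ← mul_assoc (E l m),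
        ← mul_assoc (E m k)]
      refine (isCovered_mul_column hE hm (Finset.mem_insert_self _ _)
        (Finset.mem_insert_of_mem hl) hlm.symm
        (blockSubgroup_mono (Finset.erase_subset _ _) subset_rfl hcol)).congr (mk_mul_congr ?_ _)
      rw [QuotientGroup.mk_mul_of_mem _ hmem, mk_row_mul_column hE hm hk hcol]
  · rw [hE.comm_assoc hkl him.symm hlm hki]
    have hkW : k ∈ S.erase i := Finset.mem_erase.2 ⟨hki, hk⟩
    by_cases hli : l = i
    · subst hli
      rw [hE.comm_adj_assoc hkl him hkm, hE.comm_assoc hkm him him.symm hkm,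
        column_comm hE hkl hkm (Finset.notMem_erase l S) hu, ← mul_assoc (E k m)]
      exact (isCovered_big hi (mul_mem (mem_block hkW (Finset.mem_singleton_self _) hkm) hu)).congr
        (mk_mul_congr (mk_mul_congr (QuotientGroup.mk_mul_of_mem _ hmem) _) _)
    · rw [hE.comm_assoc hkl him hli hkm]
      obtain ⟨u', hu', h⟩ := column_normalize hE hkl hkm hkW hu
      rw [h]
      exact (isCovered_big hi hu').congr
        (mk_mul_congr (mk_mul_congr (QuotientGroup.mk_mul_of_mem _ hmem) _) _)

lemma isCovered_of_mem (hE : IsSteinberg E) (hthird : ∀ i j : ι, ∃ k, k ≠ i ∧ k ≠ j)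
    (hm : m ∉ S) {g : G} (hg : g ∈ blockSubgroup E (insert m S) (insert m S)) :
    IsCovered E S m g := by
  refine blockSubgroup_induction (p := IsCovered E S m) hE (isCovered_column (one_mem _)) ?_ hg
  rintro a ha b hb hab y - (⟨u, hu, hy⟩ | ⟨i, hi, u, hu, hy⟩)
  · exact (isCovered_mul_column hE hm ha hb hab hu).congr (mk_mul_congr hy _)
  · refine IsCovered.congr ?_ (mk_mul_congr hy _)
    rcases Finset.mem_insert.1 hb with rfl | hbS
    · exact isCovered_column_mul_big hE hm hthird hi (Finset.mem_of_mem_insert_of_ne ha hab) hu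
    rcases Finset.mem_insert.1 ha with rfl | haS
    · exact isCovered_row_mul_big hE hm hi hbS hu
    · exact isCovered_block_mul_big hE hm hi haS hbS hab hu

lemma exists_row_mul_block (hE : IsSteinberg E) (hm : m ∉ S) {h : G}
    (hh : h ∈ blockSubgroup E (insert m S) S) :
    ∃ v ∈ blockSubgroup (fun i j => E j i) S {m}, ∃ k ∈ blockSubgroup E S S, h = v * k := by
  refine blockSubgroup_induction (p := fun h => ∃ v ∈ blockSubgroup (fun i j => E j i) S {m},
    ∃ k ∈ blockSubgroup E S S, h = v * k) hE ⟨1, one_mem _, 1, one_mem _, by simp⟩ ?_ hh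
  rintro a ha b hb hab _ - ⟨v, hv, k, hk, rfl⟩
  rcases Finset.mem_insert.1 ha with rfl | haS
  · exact ⟨E a b * v, mul_mem (mem_block (E := fun i j => E j i) hb
      (Finset.mem_singleton_self _) hab.symm) hv, k, hk, (mul_assoc _ _ _).symm⟩
  · obtain ⟨v', hv', h'⟩ := column_normalize hE.transpose hab.symm
      (ne_of_mem_of_not_mem hb hm) hb hv
    exact ⟨v', hv', E a b * k, mul_mem (mem_block haS hb hab) hk, by
      rw [← mul_assoc, h', mul_assoc]⟩

end Cosets

section Faithful

variable [Fintype ι] [DecidableEq ι] {E : ι → ι → G} {π : G →* Matrix ι ι (ZMod 2)}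

lemma map_apply_of_row_notMem (hE : IsSteinberg E)
    (hπ : ∀ i j, i ≠ j → π (E i j) = transvection i j 1) {A B : Finset ι} {a : ι} (ha : a ∉ A)
    (c : ι) {g : G} (hg : g ∈ blockSubgroup E A B) :
    π g a c = (1 : Matrix ι ι (ZMod 2)) a c := by
  refine blockSubgroup_induction (p := fun g => π g a c = (1 : Matrix ι ι (ZMod 2)) a c) hE
    (by rw [_root_.map_one]) ?_ hg
  intro i hi j _ hij y _ hy
  rw [_root_.map_mul, hπ i j hij,
    transvection_mul_apply_of_ne _ _ _ _ (ne_of_mem_of_not_mem hi ha).symm, hy]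

lemma map_apply_of_column_notMem (hE : IsSteinberg E)
    (hπ : ∀ i j, i ≠ j → π (E i j) = transvection i j 1) {A B : Finset ι} {c : ι} (hc : c ∉ B)
    {g : G} (hg : g ∈ blockSubgroup E A B) (a : ι) :
    π g a c = (1 : Matrix ι ι (ZMod 2)) a c := by
  refine blockSubgroup_induction (p := fun g => ∀ a, π g a c = (1 : Matrix ι ι (ZMod 2)) a c) hE
    (fun a => by rw [_root_.map_one]) ?_ hg a
  intro i _ j hj hij y _ hy a
  rw [_root_.map_mul, hπ i j hij]
  by_cases hai : a = i
  · subst hai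
    rw [transvection_mul_apply_same, hy, hy, one_apply_ne (ne_of_mem_of_not_mem hj hc), mul_zero,
      add_zero]
  · rw [transvection_mul_apply_of_ne _ _ _ _ hai, hy]

lemma column_eq_one (hE : IsSteinberg E)
    (hπ : ∀ i j, i ≠ j → π (E i j) = transvection i j 1) {m : ι} (W : Finset ι) (hm : m ∉ W)
    {u : G} (hu : u ∈ blockSubgroup E W {m}) (h : ∀ a ∈ W, π u a m = 0) : u = 1 := by
  induction W using Finset.induction_on generalizing u with
  | empty => simpa [blockSubgroup] using hu
  | insert i W hi ih =>
    have him : i ≠ m := fun h => hm (h ▸ Finset.mem_insert_self _ _)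
    have hmW : m ∉ W := fun h => hm (Finset.mem_insert_of_mem h)
    rcases column_split hE him hu with hu' | ⟨u', hu', rfl⟩
    all_goals rw [Finset.erase_insert hi] at hu'
    · exact ih hmW hu' fun a ha => h a (Finset.mem_insert_of_mem ha)
    · have h₁ := h i (Finset.mem_insert_self _ _)
      rw [_root_.map_mul, hπ i m him, transvection_mul_apply_same,
        map_apply_of_row_notMem hE hπ hi m hu', map_apply_of_row_notMem hE hπ hmW m hu',
        one_apply_ne him, one_apply_eq] at h₁
      simp at h₁

/-- The group defined by the Steinberg relations over the field with two elements embeds into the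
group of matrices. -/
theorem eq_one_of_map_eq_one (hE : IsSteinberg E) (hthird : ∀ i j : ι, ∃ k, k ≠ i ∧ k ≠ j)
    (hπ : ∀ i j, i ≠ j → π (E i j) = transvection i j 1) (T : Finset ι) {g : G}
    (hg : g ∈ blockSubgroup E T T) (hg1 : π g = 1) : g = 1 := by
  induction T using Finset.induction_on generalizing g with
  | empty => simpa [blockSubgroup] using hg
  | insert m S hm ih =>
    have key {x : G} (hx : (g : G ⧸ blockSubgroup E (insert m S) S) = x) (a : ι) :
        π x a m = (1 : Matrix ι ι (ZMod 2)) a m := by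
      have h : g⁻¹ * x ∈ blockSubgroup E (insert m S) S := QuotientGroup.eq.1 hx
      rw [← map_apply_of_column_notMem hE hπ hm h a, ← one_mul (π (g⁻¹ * x)), ← hg1,
        ← _root_.map_mul, mul_inv_cancel_left]
    rcases isCovered_of_mem hE hthird hm hg with ⟨u, hu, hx⟩ | ⟨i, hi, u, hu, hx⟩
    · have hu1 : u = 1 := column_eq_one hE hπ S hm hu fun a ha => by
        rw [key hx, one_apply_ne (ne_of_mem_of_not_mem ha hm)]
      have hgH : g ∈ blockSubgroup E (insert m S) S := by
        have h := QuotientGroup.eq.1 hx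
        rwa [hu1, mul_one, inv_mem_iff] at h
      obtain ⟨v, hv, k, hk, rfl⟩ := exists_row_mul_block hE hm hgH
      let π' : G →* Matrix ι ι (ZMod 2) :=
        { toFun := fun g => (π g⁻¹)ᵀ
          map_one' := by simp
          map_mul' := fun x y => by rw [_root_.mul_inv_rev, _root_.map_mul, transpose_mul] }
      have hπ' : ∀ i j, i ≠ j → π' (E j i) = transvection i j 1 := fun i j hij => by
        change (π (E j i)⁻¹)ᵀ = _
        rw [hE.inv_eq hij.symm, hπ j i hij.symm]
        simp [transvection]
      have hvk : π v⁻¹ = π k := by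
        rw [← mul_one (π v⁻¹), ← hg1, ← _root_.map_mul, inv_mul_cancel_left]
      have hv1 : v = 1 := column_eq_one hE.transpose hπ' S hm hv fun a ha => by
        change π v⁻¹ m a = 0
        rw [hvk, map_apply_of_row_notMem hE hπ hm a hk,
          one_apply_ne (ne_of_mem_of_not_mem ha hm).symm]
      rw [hv1, one_mul] at hg1 ⊢
      exact ih hk hg1
    · have him : i ≠ m := fun h => hm (h ▸ hi)
      have hmS : m ∉ S.erase i := fun h => hm (Finset.mem_of_mem_erase h)
      have h := key hx m
      rw [_root_.map_mul, _root_.map_mul, hπ m i him.symm, hπ i m him,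
        transvection_mul_apply_same, transvection_mul_apply_same,
        transvection_mul_apply_of_ne _ _ _ _ him.symm,
        map_apply_of_row_notMem hE hπ hmS m hu,
        map_apply_of_row_notMem hE hπ (Finset.notMem_erase i S) m hu, one_apply_eq,
        one_apply_ne him] at h
      exact absurd h (by decide)

end Faithful

end Steinberg

section Relations

variable {n : ℕ}

lemma perm_conj_sgn (σ : Equiv.Perm (Fin n)) (δ : Fin n → ℤˣ) :
    perm σ * sgn δ * (perm σ)⁻¹ = sgn (δ ∘ σ.symm) := by
  rw [mul_inv_eq_iff_eq_mul]
  refine frAut_ext fun k => ?_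
  simp [_root_.map_zpow]

lemma sgn_conj_tr_of_source {δ : Fin n → ℤˣ} {i j : Fin n} (h : i ≠ j) (hi : δ i = -1)
    (hj : δ j = 1) (a b : ℤ) : sgn δ * tr h a b * (sgn δ)⁻¹ = tr h (-a) (-b) := by
  rw [mul_inv_eq_iff_eq_mul]
  refine frAut_ext fun k => ?_
  by_cases hk : k = j
  · subst hk
    simp [_root_.map_mul, _root_.map_zpow, hi, hj]
  · simp [tr_of_ne h hk, _root_.map_zpow]

lemma sgn_conj_tr_of_target {δ : Fin n → ℤˣ} {i j : Fin n} (h : i ≠ j) (hi : δ i = 1)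
    (hj : δ j = -1) (a b : ℤ) : sgn δ * tr h a b * (sgn δ)⁻¹ = tr h (-b) (-a) := by
  rw [mul_inv_eq_iff_eq_mul]
  refine frAut_ext fun k => ?_
  by_cases hk : k = j
  · subst hk
    simp [_root_.map_mul, _root_.map_zpow, hi, hj, mul_assoc]
  · simp [tr_of_ne h hk, _root_.map_zpow]

lemma sgn_mulSingle_comm_tr {i j k : Fin n} (h : i ≠ j) (hki : k ≠ i) (hkj : k ≠ j) (u : ℤˣ)
    (a b : ℤ) : sgn (Pi.mulSingle k u) * tr h a b = tr h a b * sgn (Pi.mulSingle k u) := by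
  refine frAut_ext fun l => ?_
  by_cases hl : l = j
  · subst hl
    simp [_root_.map_mul, _root_.map_zpow, Pi.mulSingle_eq_of_ne hki.symm,
      Pi.mulSingle_eq_of_ne hkj.symm]
  · simp [tr_of_ne h hl, _root_.map_zpow]

lemma tr_comm_of_target_ne {i j k l : Fin n} (h₁ : i ≠ j) (h₂ : k ≠ l) (h₃ : j ≠ k) (h₄ : i ≠ l)
    (h₅ : j ≠ l) (a b c d : ℤ) : tr h₁ a b * tr h₂ c d = tr h₂ c d * tr h₁ a b := by
  refine frAut_ext fun m => ?_
  by_cases hmj : m = j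
  · subst hmj
    simp [_root_.map_mul, _root_.map_zpow, tr_of_ne h₂ h₅, tr_of_ne h₂ h₄]
  by_cases hml : m = l
  · subst hml
    simp [_root_.map_mul, _root_.map_zpow, tr_of_ne h₁ hmj, tr_of_ne h₁ h₃.symm]
  · simp [tr_of_ne h₁ hmj, tr_of_ne h₂ hml]

lemma tr_left_comm_tr_right {i j k : Fin n} (h₁ : i ≠ j) (h₂ : k ≠ j) (a b : ℤ) :
    tr h₁ a 0 * tr h₂ 0 b = tr h₂ 0 b * tr h₁ a 0 := by
  refine frAut_ext fun m => ?_
  by_cases hmj : m = j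
  · subst hmj
    simp [_root_.map_mul, _root_.map_zpow, tr_of_ne h₁ h₂, tr_of_ne h₂ h₁, mul_assoc]
  · simp [tr_of_ne h₁ hmj, tr_of_ne h₂ hmj]

lemma tr_comm_adj {i j k : Fin n} (h₁ : i ≠ j) (h₂ : j ≠ k) (h₃ : i ≠ k) :
    tr h₁ 0 1 * tr h₂ 0 1 = tr h₂ 0 1 * tr h₁ 0 1 * tr h₃ 0 1 := by
  refine frAut_ext fun m => ?_
  by_cases hmj : m = j
  · subst hmj
    simp [_root_.map_mul, tr_of_ne h₂ h₂, tr_of_ne h₂ h₃, tr_of_ne h₃ h₂]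
  by_cases hmk : m = k
  · subst hmk
    simp [_root_.map_mul, tr_of_ne h₁ hmj, tr_of_ne h₁ h₁, tr_of_ne h₂ h₃, mul_assoc]
  · simp [tr_of_ne h₁ hmj, tr_of_ne h₂ hmk, tr_of_ne h₃ hmk]

lemma perm_swap_eq {i j : Fin n} (h : i ≠ j) : perm (Equiv.swap i j) =
    tr h 1 0 * tr h.symm (-1) 0 * tr h 0 1 * sgn (Pi.mulSingle i (-1)) := by
  refine frAut_ext fun m => ?_
  by_cases hmi : m = i
  · subst hmi
    simp [_root_.map_mul, _root_.map_inv, tr_of_ne h h]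
  by_cases hmj : m = j
  · subst hmj
    simp [_root_.map_mul, _root_.map_inv, tr_of_ne h h, tr_of_ne h.symm hmi,
      Pi.mulSingle_eq_of_ne hmi]
  · simp [tr_of_ne h hmj, tr_of_ne h.symm hmi, Pi.mulSingle_eq_of_ne hmi,
      Equiv.swap_apply_of_ne_of_ne hmi hmj]

lemma mat_tr {i j : Fin n} (h : i ≠ j) : mat (tr h 0 1) = transvection i j 1 := by
  ext a b
  by_cases hb : b = j
  · subst hb
    simp [mat, expSum, transvection, one_apply, single_apply, eq_comm]
  · simp [mat, expSum, transvection, one_apply, tr_of_ne h hb, Ne.symm hb, eq_comm]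

lemma mat_sgn (δ : Fin n → ℤˣ) : mat (sgn δ) = diagonal fun i => (δ i : ℤ) := by
  ext a b
  simp [mat, expSum, diagonal_apply]
  grind

lemma detρ_sgn (δ : Fin n → ℤˣ) : detρ n (sgn δ) = ∏ i, δ i := by
  ext
  change (mat (sgn δ)).det = _
  simp [mat_sgn, Units.coe_prod]

lemma exists_perm_apply_eq {α : Type*} [DecidableEq α] {p r i j : α} (hpr : p ≠ r)
    (hij : i ≠ j) : ∃ σ : Equiv.Perm α, σ p = i ∧ σ r = j := by
  refine ⟨Equiv.swap (Equiv.swap p i r) j * Equiv.swap p i, ?_, by simp⟩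
  have h : i ≠ Equiv.swap p i r := fun h => hpr (by simpa using congrArg (Equiv.swap p i) h)
  simp [Equiv.swap_apply_of_ne_of_ne h hij]

end Relations

section PartialInversion

variable {n : ℕ} {Q : Type*} [Group Q] {q : FrAut n →* Q} {ε : Fin n → ℤˣ}

lemma map_sgn_comp_perm (hq : q (sgn ε) = 1) (σ : Equiv.Perm (Fin n)) :
    q (sgn (ε ∘ σ)) = 1 := by
  have h := perm_conj_sgn σ.symm ε
  rw [Equiv.symm_symm] at h
  rw [← h]
  simp [_root_.map_mul, _root_.map_inv, hq]

lemma map_tr_left (hq : q (sgn ε) = 1) {r p : Fin n} (hr : ε r = -1) (hp : ε p = 1)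
    {i j : Fin n} (h : i ≠ j) : q (tr h (-1) 0) = q (tr h 0 1) := by
  have hrp : p ≠ r := fun h => absurd (h ▸ hp) (by rw [hr]; decide)
  obtain ⟨σ, hi, hj⟩ := exists_perm_apply_eq h hrp
  have h₁ := sgn_conj_tr_of_target (δ := ε ∘ σ) h (by simp [hi, hp]) (by simp [hj, hr]) 0 1
  rw [neg_zero] at h₁
  rw [← h₁, _root_.map_mul, _root_.map_mul, _root_.map_inv, map_sgn_comp_perm hq]
  simp

lemma map_tr_neg (hq : q (sgn ε) = 1) {r p : Fin n} (hr : ε r = -1) (hp : ε p = 1)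
    {i j : Fin n} (h : i ≠ j) (a b : ℤ) : q (tr h (-a) (-b)) = q (tr h a b) := by
  have hrp : p ≠ r := fun h => absurd (h ▸ hp) (by rw [hr]; decide)
  obtain ⟨σ, hi, hj⟩ := exists_perm_apply_eq h hrp.symm
  rw [← sgn_conj_tr_of_source (δ := ε ∘ σ) h (by simp [hi, hr]) (by simp [hj, hp]),
    _root_.map_mul, _root_.map_mul, _root_.map_inv, map_sgn_comp_perm hq]
  simp

/-- The images of the transvections `x_j ↦ x_j * x_i`. -/
def trImage (q : FrAut n →* Q) (i j : Fin n) : Q :=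
  if h : i ≠ j then q (tr h 0 1) else 1

lemma trImage_of_ne (q : FrAut n →* Q) {i j : Fin n} (h : i ≠ j) :
    trImage q i j = q (tr h 0 1) :=
  dif_pos h

lemma isSteinberg_trImage (hq : q (sgn ε) = 1) {r p : Fin n} (hr : ε r = -1) (hp : ε p = 1) :
    IsSteinberg (trImage q) := by
  have comm {i j k l : Fin n} (h₁ : i ≠ j) (h₂ : k ≠ l) (h₃ : j ≠ k) (h₄ : i ≠ l) :
      trImage q i j * trImage q k l = trImage q k l * trImage q i j := by
    rw [trImage_of_ne q h₁, trImage_of_ne q h₂]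
    by_cases h₅ : j = l
    · subst h₅
      rw [← map_tr_left hq hr hp h₁, ← _root_.map_mul, tr_left_comm_tr_right, _root_.map_mul]
    · rw [← _root_.map_mul, tr_comm_of_target_ne h₁ h₂ h₃ h₄ h₅, _root_.map_mul]
  refine ⟨fun {i j} h => ?_, comm, fun {i j k} h₁ h₂ h₃ => ?_⟩
  · rw [trImage_of_ne q h]
    nth_rewrite 1 [← map_tr_neg hq hr hp h]
    rw [← tr_inv, _root_.map_inv, inv_mul_cancel]
  · have h : trImage q i j * trImage q j k =
        trImage q j k * trImage q i j * trImage q i k := by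
      simp only [trImage_of_ne q h₁, trImage_of_ne q h₂, trImage_of_ne q h₃, ← _root_.map_mul,
        tr_comm_adj h₁ h₂ h₃]
    rw [h, mul_assoc, comm h₁ h₃ h₁.symm h₃, ← mul_assoc, comm h₂ h₃ h₃.symm h₂, mul_assoc]

lemma map_sgn_mulSingle_eq (hq : q (sgn ε) = 1) {r p : Fin n} (hr : ε r = -1) (hp : ε p = 1)
    (i j : Fin n) (u : ℤˣ) : q (sgn (Pi.mulSingle i u)) = q (sgn (Pi.mulSingle j u)) := by
  by_cases hij : i = j
  · rw [hij]
  rcases Int.units_eq_one_or u with rfl | rfl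
  · simp
  have hrp : r ≠ p := fun h => absurd (h ▸ hp) (by rw [hr]; decide)
  obtain ⟨σ, hi, hj⟩ := exists_perm_apply_eq hij hrp
  have h : (ε ∘ σ) * (ε ∘ (σ * Equiv.swap i j)) * Pi.mulSingle j (-1) =
      Pi.mulSingle i (-1) := by
    ext k
    by_cases hki : k = i
    · subst hki
      simp [hi, hj, hr, hp, Pi.mulSingle_eq_of_ne hij]
    by_cases hkj : k = j
    · subst hkj
      simp [hi, hj, hr, hp, Pi.mulSingle_eq_of_ne hki]
    · simp [Pi.mulSingle_eq_of_ne hki, Pi.mulSingle_eq_of_ne hkj,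
        Equiv.swap_apply_of_ne_of_ne hki hkj]
  rw [← h, _root_.map_mul, _root_.map_mul, _root_.map_mul, _root_.map_mul,
    map_sgn_comp_perm hq, map_sgn_comp_perm hq, one_mul, one_mul]

lemma map_sgn_eq (hq : q (sgn ε) = 1) {r p : Fin n} (hr : ε r = -1) (hp : ε p = 1)
    (δ : Fin n → ℤˣ) : q (sgn δ) = q (sgn (Pi.mulSingle r (∏ i, δ i))) := by
  let B : (Fin n → ℤˣ) →* Q := (q.comp sgn).comp
    ((MonoidHom.mulSingle (fun _ => ℤˣ) r).comp
      { toFun := fun δ => ∏ i, δ i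
        map_one' := by simp
        map_mul' := fun δ η => by simp [Finset.prod_mul_distrib] })
  have hmem : ∏ i, Pi.mulSingle i (δ i) ∈ (q.comp sgn).eqLocus B :=
    Subgroup.prod_mem _ fun i _ => by
      change q (sgn (Pi.mulSingle i (δ i))) =
        q (sgn (Pi.mulSingle r (∏ k, (Pi.mulSingle i (δ i) : Fin n → ℤˣ) k)))
      rw [Finset.prod_pi_mulSingle', if_pos (Finset.mem_univ i), map_sgn_mulSingle_eq hq hr hp]
  rw [Finset.univ_prod_mulSingle] at hmem
  exact hmem

lemma exists_ne_ne (hn : 3 ≤ n) (i j : Fin n) : ∃ k, k ≠ i ∧ k ≠ j := by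
  have hcard : ({i, j} : Finset (Fin n)).card < (Finset.univ : Finset (Fin n)).card := by
    rw [Finset.card_fin]
    exact Finset.card_le_two.trans_lt hn
  obtain ⟨k, -, hk⟩ := Finset.exists_mem_notMem_of_card_lt_card hcard
  exact ⟨k, by simpa using hk⟩

lemma exists_eq_block_mul_sgn (hn : 3 ≤ n) (hq : q (sgn ε) = 1) {r p : Fin n} (hr : ε r = -1)
    (hp : ε p = 1) (x : FrAut n) :
    ∃ e ∈ blockSubgroup (trImage q) Finset.univ Finset.univ, ∃ u : ℤˣ,
      q x = e * q (sgn (Pi.mulSingle r u)) := by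
  let B := blockSubgroup (trImage q) Finset.univ Finset.univ
  let z : ℤˣ →* Q := (q.comp sgn).comp (MonoidHom.mulSingle (fun _ => ℤˣ) r)
  have hcomm (e : B) (u : ℤˣ) : Commute (B.subtype e) (z u) := by
    have hle : B ≤ Subgroup.centralizer {z u} := by
      refine (Subgroup.closure_le _).2 ?_
      rintro _ ⟨i, -, j, -, hij, rfl⟩
      obtain ⟨k, hki, hkj⟩ := exists_ne_ne hn i j
      rw [SetLike.mem_coe, Subgroup.mem_centralizer_singleton_iff, trImage_of_ne q hij]
      change q (tr hij 0 1) * q (sgn (Pi.mulSingle r u)) = q (sgn (Pi.mulSingle r u)) * _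
      rw [map_sgn_mulSingle_eq hq hr hp r k, ← _root_.map_mul, ← _root_.map_mul,
        sgn_mulSingle_comm_tr hij hki hkj]
    exact Subgroup.mem_centralizer_singleton_iff.1 (hle e.2)
  let P := (B.subtype.noncommCoprod z hcomm).range
  have hB {e : Q} (he : e ∈ B) : e ∈ P := ⟨(⟨e, he⟩, 1), by simp⟩
  have hz (u : ℤˣ) : z u ∈ P := ⟨(1, u), by simp⟩
  have hr' {i j : Fin n} (h : i ≠ j) : q (tr h 0 1) ∈ P := by
    rw [← trImage_of_ne]
    exact hB (mem_block (Finset.mem_univ _) (Finset.mem_univ _) h)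
  have hl' {i j : Fin n} (h : i ≠ j) : q (tr h (-1) 0) ∈ P := by
    rw [map_tr_left hq hr hp]
    exact hr' h
  have hl'' {i j : Fin n} (h : i ≠ j) : q (tr h 1 0) ∈ P := by
    have h₁ := map_tr_neg hq hr hp h 1 0
    rw [neg_zero] at h₁
    rw [← h₁]
    exact hl' h
  have hδ (δ : Fin n → ℤˣ) : q (sgn δ) ∈ P := by
    rw [map_sgn_eq hq hr hp]
    exact hz _
  have hσ (σ : Equiv.Perm (Fin n)) : q (perm σ) ∈ P := by
    induction σ using Equiv.Perm.swap_induction_on with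
    | one => simp
    | swap_mul σ i j hij ih =>
      rw [_root_.map_mul, _root_.map_mul, perm_swap_eq hij]
      simp only [_root_.map_mul]
      exact mul_mem (mul_mem (mul_mem (mul_mem (hl'' hij) (hl' hij.symm)) (hr' hij)) (hδ _)) ih
  have hx : q x ∈ P := mem_of_nielsen_generators (P := P.comap q) (fun _ _ h => hl'' h)
    (fun _ _ h => hr' h) hσ hδ x
  obtain ⟨⟨e, u⟩, h⟩ := hx
  exact ⟨e, e.2, u, h.symm⟩

end PartialInversion

/-- For `n ≥ 3`, if `f ∈ Aut(F_n)` sends each generator `x_i` to `x_i^{ε i}` with signs `ε`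
taking both values `1` and `-1`, then `IA_n ⊆ N(f)` and `N(f) = ρ⁻¹(Γ_n(2))` if `∏ ε = 1`,
while `N(f) = ρ⁻¹(GΓ_n(2))` if `∏ ε = -1`. -/
theorem normalClosure_of_partial_inversion (n : ℕ) (hn : 3 ≤ n) (ε : Fin n → ℤˣ)
    (hneg : ∃ i, ε i = -1) (hpos : ∃ i, ε i = 1) (f : FrAut n)
    (hf : ∀ i : Fin n, f (FreeGroup.of i) = FreeGroup.of i ^ ((ε i : ℤ))) :
    IA n ≤ Subgroup.normalClosure {f} ∧
    (∏ i, ε i = 1 → Subgroup.normalClosure {f} = Subgroup.comap (ρ n) (GammaGL n 2)) ∧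
    (∏ i, ε i = -1 → Subgroup.normalClosure {f} = Subgroup.comap (ρ n) (GGamma n 2)) := by
  obtain ⟨r, hr⟩ := hneg
  obtain ⟨p, hp⟩ := hpos
  obtain rfl : f = sgn ε := frAut_ext fun k => by rw [hf, sgn_of]
  let N := Subgroup.normalClosure {sgn ε}
  let q : FrAut n →* FrAut n ⧸ N := QuotientGroup.mk' N
  have hfN : sgn ε ∈ N := Subgroup.subset_normalClosure rfl
  have hq_iff (x : FrAut n) : q x = 1 ↔ x ∈ N := QuotientGroup.eq_one_iff x
  have hq : q (sgn ε) = 1 := (hq_iff _).2 hfN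
  have hred (x : FrAut n) : (redGL n 2 (ρ n x) : Matrix (Fin n) (Fin n) (ZMod 2)) =
      (mat x).map (Int.castRingHom (ZMod 2)) := rfl
  have hsgn (δ : Fin n → ℤˣ) : redGL n 2 (ρ n (sgn δ)) = 1 := by
    refine Units.ext ?_
    rw [hred, mat_sgn, diagonal_map (_root_.map_zero _), Units.val_one, ← diagonal_one]
    congr 1
    ext i
    rcases Int.units_eq_one_or (δ i) with h | h <;> simp [h]
  have hN₂ : N ≤ (GGamma n 2).comap (ρ n) := by
    have : ((GGamma n 2).comap (ρ n)).Normal := (MonoidHom.normal_ker _).comap _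
    refine Subgroup.normalClosure_le_normal (Set.singleton_subset_iff.2 ?_)
    exact hsgn ε
  let π₀ : FrAut n ⧸ N →* GL (Fin n) (ZMod 2) :=
    QuotientGroup.lift N ((redGL n 2).comp (ρ n)) fun x hx => hN₂ hx
  let π := (Units.coeHom (Matrix (Fin n) (Fin n) (ZMod 2))).comp π₀
  have hπ (i j : Fin n) (h : i ≠ j) : π (trImage q i j) = transvection i j 1 := by
    rw [trImage_of_ne q h]
    change (redGL n 2 (ρ n (tr h 0 1)) : Matrix (Fin n) (Fin n) (ZMod 2)) = _
    rw [hred, mat_tr, transvection, transvection, Matrix.map_add _ (_root_.map_add _), map_single,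
      Matrix.map_one _ (_root_.map_zero _) (_root_.map_one _), _root_.map_one]
  have hmem (x : FrAut n) (hx : ρ n x ∈ GGamma n 2) :
      ∃ u : ℤˣ, q x = q (sgn (Pi.mulSingle r u)) := by
    obtain ⟨e, he, u, hxe⟩ := exists_eq_block_mul_sgn hn hq hr hp x
    have he₁ : π e = 1 := by
      rw [eq_mul_inv_of_mul_eq hxe.symm, ← _root_.map_inv, ← _root_.map_mul]
      change (redGL n 2 (ρ n (x * (sgn (Pi.mulSingle r u))⁻¹)) :
        Matrix (Fin n) (Fin n) (ZMod 2)) = 1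
      rw [_root_.map_mul, _root_.map_mul, _root_.map_inv, _root_.map_inv, hsgn,
        show redGL n 2 (ρ n x) = 1 from hx]
      simp
    refine ⟨u, ?_⟩
    rw [hxe, eq_one_of_map_eq_one (isSteinberg_trImage hq hr hp) (exists_ne_ne hn) hπ _ he he₁,
      one_mul]
  have h₁ (hε : ∏ i, ε i = 1) : N = (GammaGL n 2).comap (ρ n) := by
    have hN₁ : N ≤ (detρ n).ker := Subgroup.normalClosure_le_normal
      (Set.singleton_subset_iff.2 ((detρ_sgn ε).trans hε))
    refine le_antisymm (fun x hx => ⟨hN₂ hx, hN₁ hx⟩) fun x hx => ?_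
    obtain ⟨u, hu⟩ := hmem x hx.1
    have h := hN₁ (QuotientGroup.eq.1 hu)
    rw [MonoidHom.mem_ker, _root_.map_mul, _root_.map_inv, detρ_sgn,
      Finset.prod_pi_mulSingle', if_pos (Finset.mem_univ r), show detρ n x = 1 from hx.2,
      inv_one, one_mul] at h
    rw [h] at hu
    exact (hq_iff x).1 (by simpa using hu)
  have h₂ (hε : ∏ i, ε i = -1) : N = (GGamma n 2).comap (ρ n) := by
    refine le_antisymm hN₂ fun x hx => ?_
    obtain ⟨u, hu⟩ := hmem x hx
    rw [← hq_iff, hu]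
    rcases Int.units_eq_one_or u with rfl | rfl
    · simp
    · rw [← hε, ← map_sgn_eq hq hr hp, hq]
  refine ⟨fun x hx => ?_, h₁, h₂⟩
  have hx' : ρ n x ∈ GammaGL n 2 := by
    rw [show ρ n x = 1 from hx]
    exact one_mem _
  rcases Int.units_eq_one_or (∏ i, ε i) with hε | hε
  · exact (h₁ hε).ge hx'
  · exact (h₂ hε).ge hx'.1

end NormalClosurePaper
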